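/- arXiv:1903.01100 — 3 statements merged into one kernel-verified Lean document; each statement's English description precedes it below -/
import Mathlib

section
/- The space L¹([0,1]) does not embed isomorphically into ℓ¹: there is no continuous linear map T : L¹([0,1]) → ℓ¹ that is bounded below, i.e., there do not exist T continuous linear and a constant c > 0 such that c · ‖f‖_{L¹} ≤ ‖T f‖ for all f ∈ L¹([0,1]). -/
open MeasureTheory

/-!
Let `J : L² → L¹` be the inclusion. Bounded operators from a Hilbert space to `ℓ¹` send every
infinite orthonormal family `e` to zero in norm. Indeed the images are coordinatewise null by
Bessel's inequality; if their norms did not tend to zero, the gliding hump would produce `N` of them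
whose sum has norm at least `δ N`, whereas that norm is `O(√N)` because `e` is orthonormal. If `T`
were bounded below, then applying this to `T ∘ J` would give `‖e n‖₁ → 0`. For a uniformly bounded
orthonormal family, such as the cosines, this contradicts `1 = ‖e n‖₂² ≤ M ‖e n‖₁`.
-/

open Filter Topology
open scoped ENNReal InnerProductSpace

section GlidingHump

variable {κ ι : Type*} {E : ι → Type*} [∀ i, NormedAddCommGroup (E i)]

theorem hasSum_norm_lp_one (u : lp E 1) : HasSum (fun i => ‖u i‖) ‖u‖ := by
  simpa only [ENNReal.toReal_one, Real.rpow_one] using lp.hasSum_norm (p := 1) (by norm_num) u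

/- The Brezis–Lieb identity in `ℓ¹`: asymptotically, `v n` does not interact with a fixed `w`. -/
theorem tendsto_norm_add_sub_norm_lp_one {l : Filter κ} {v : κ → lp E 1}
    (hv : ∀ i, Tendsto (fun n => v n i) l (𝓝 0)) (w : lp E 1) :
    Tendsto (fun n => ‖w + v n‖ - ‖v n‖) l (𝓝 ‖w‖) := by
  have norm_sub_eq_tsum (n : κ) : ‖w + v n‖ - ‖v n‖ = ∑' i, (‖w i + v n i‖ - ‖v n i‖) :=
    ((hasSum_norm_lp_one (w + v n)).sub (hasSum_norm_lp_one (v n))).tsum_eq.symm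
  have tendsto_coord (i : ι) : Tendsto (fun n => ‖w i + v n i‖ - ‖v n i‖) l (𝓝 ‖w i‖) := by
    simpa only [add_zero, norm_zero, sub_zero] using
      ((hv i).const_add (w i)).norm.sub (hv i).norm
  have dominated (n : κ) (i : ι) : ‖‖w i + v n i‖ - ‖v n i‖‖ ≤ ‖w i‖ := by
    simpa only [Real.norm_eq_abs, add_sub_cancel_right] using
      abs_norm_sub_norm_le (w i + v n i) (v n i)
  simp_rw [norm_sub_eq_tsum, ← (hasSum_norm_lp_one w).tsum_eq]
  exact tendsto_tsum_of_dominated_convergence (hasSum_norm_lp_one w).summable tendsto_coord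
    (Eventually.of_forall dominated)

theorem exists_card_eq_mul_le_norm_sum_lp_one {v : κ → lp E 1}
    (hv : ∀ i, Tendsto (fun n => v n i) cofinite (𝓝 0)) {c δ : ℝ} (hδ : δ < c)
    (hc : ∃ᶠ n in cofinite, c ≤ ‖v n‖) (N : ℕ) :
    ∃ F : Finset κ, F.card = N ∧ N * δ ≤ ‖∑ n ∈ F, v n‖ := by
  classical
  induction N with
  | zero => exact ⟨∅, by simp⟩
  | succ N ih =>
    obtain ⟨F, hcard, hF⟩ := ih
    have almost_additive : ∀ᶠ n in cofinite,
        ‖∑ m ∈ F, v m‖ - (c - δ) < ‖∑ m ∈ F, v m + v n‖ - ‖v n‖ :=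
      (tendsto_norm_add_sub_norm_lp_one hv _).eventually_const_lt
        (sub_lt_self _ (sub_pos.2 hδ))
    obtain ⟨n, hcn, hadd, hnF⟩ :=
      (hc.and_eventually (almost_additive.and F.eventually_cofinite_notMem)).exists
    refine ⟨insert n F, by rw [Finset.card_insert_of_notMem hnF, hcard], ?_⟩
    rw [Finset.sum_insert hnF, add_comm (v n)]
    push_cast
    linarith

theorem tendsto_zero_lp_one_of_norm_sum_le_isLittleO {v : κ → lp E 1}
    (hv : ∀ i, Tendsto (fun n => v n i) cofinite (𝓝 0)) {g : ℕ → ℝ}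
    (hg : g =o[atTop] fun N => (N : ℝ)) (hsum : ∀ F : Finset κ, ‖∑ n ∈ F, v n‖ ≤ g F.card) :
    Tendsto v cofinite (𝓝 0) := by
  refine NormedAddGroup.tendsto_nhds_zero.2 fun ε hε => ?_
  by_contra hnot
  have hfreq : ∃ᶠ n in cofinite, ε ≤ ‖v n‖ := by simpa only [not_eventually, not_lt] using hnot
  obtain ⟨N, hgN, hN⟩ :=
    ((hg.bound (show 0 < ε / 3 by positivity)).and (eventually_gt_atTop 0)).exists
  obtain ⟨F, rfl, hF⟩ := exists_card_eq_mul_le_norm_sum_lp_one hv (half_lt_self hε) hfreq N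
  have hcard : (0 : ℝ) < F.card := mod_cast hN
  have : F.card * (ε / 2) ≤ ε / 3 * F.card :=
    calc F.card * (ε / 2) ≤ ‖∑ n ∈ F, v n‖ := hF
      _ ≤ g F.card := hsum F
      _ ≤ ‖g F.card‖ := Real.le_norm_self _
      _ ≤ ε / 3 * F.card := by simpa only [Real.norm_natCast] using hgN
  nlinarith [mul_pos hcard hε]

end GlidingHump

theorem sqrt_isLittleO_id_atTop : Real.sqrt =o[atTop] fun x : ℝ => x := by
  have one_isLittleO_sqrt : (fun _ : ℝ => (1 : ℝ)) =o[atTop] Real.sqrt :=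
    (Asymptotics.isLittleO_one_left_iff ℝ).2
      (tendsto_norm_atTop_atTop.comp Real.tendsto_sqrt_atTop)
  refine (one_isLittleO_sqrt.mul_isBigO (Asymptotics.isBigO_refl Real.sqrt atTop)).congr' ?_ ?_
  · exact Eventually.of_forall fun x => one_mul √x
  · filter_upwards [eventually_ge_atTop 0] with x hx using Real.mul_self_sqrt hx

section Orthonormal

variable {𝕜 H κ ι : Type*} [RCLike 𝕜] [NormedAddCommGroup H] [InnerProductSpace 𝕜 H]
  {e : κ → H}

theorem tendsto_apply_orthonormal_cofinite [CompleteSpace H] (he : Orthonormal 𝕜 e)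
    (φ : StrongDual 𝕜 H) : Tendsto (fun n => φ (e n)) cofinite (𝓝 0) := by
  have hsq : Tendsto (fun n => ‖⟪e n, (InnerProductSpace.toDual 𝕜 H).symm φ⟫_𝕜‖ ^ 2)
      cofinite (𝓝 0) := (he.inner_products_summable _).tendsto_cofinite_zero
  simp_rw [norm_inner_symm (e _), InnerProductSpace.toDual_symm_apply] at hsq
  simpa only [Real.sqrt_sq (norm_nonneg _), Real.sqrt_zero, ← tendsto_zero_iff_norm_tendsto_zero]
    using hsq.sqrt

theorem norm_sum_orthonormal (he : Orthonormal 𝕜 e) (F : Finset κ) :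
    ‖∑ n ∈ F, e n‖ = √F.card := by
  have h := he.inner_sum (fun _ => 1) (fun _ => 1) F
  simp only [one_smul, map_one, mul_one, Finset.sum_const, nsmul_eq_mul] at h
  rw [norm_eq_sqrt_re_inner (𝕜 := 𝕜), h, RCLike.natCast_re]

theorem tendsto_map_orthonormal_lp_one [CompleteSpace H] (he : Orthonormal 𝕜 e)
    (S : H →L[𝕜] lp (fun _ : ι => 𝕜) 1) : Tendsto (fun n => S (e n)) cofinite (𝓝 0) := by
  refine tendsto_zero_lp_one_of_norm_sum_le_isLittleO (g := fun N => ‖S‖ * √N)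
    (fun i => tendsto_apply_orthonormal_cofinite he (lp.evalCLM 𝕜 (fun _ : ι => 𝕜) 1 i ∘L S))
    ((sqrt_isLittleO_id_atTop.comp_tendsto tendsto_natCast_atTop_atTop).const_mul_left _)
    fun F => ?_
  rw [← map_sum, ← norm_sum_orthonormal he]
  exact S.le_opNorm _

end Orthonormal

section LpInclusion

theorem norm_sq_Lp_two_eq_integral {X E : Type*} [MeasurableSpace X] {μ : Measure X}
    [NormedAddCommGroup E] (f : Lp E 2 μ) : ‖f‖ ^ 2 = ∫ x, ‖f x‖ ^ 2 ∂μ := by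
  have hint : 0 ≤ ∫ x, ‖f x‖ ^ 2 ∂μ := integral_nonneg fun x => sq_nonneg _
  rw [Lp.norm_def, (Lp.memLp f).eLpNorm_eq_integral_rpow_norm two_ne_zero ENNReal.ofNat_ne_top]
  simp only [ENNReal.toReal_ofNat, Real.rpow_ofNat]
  rw [ENNReal.toReal_ofReal (by positivity), ← Real.rpow_natCast, ← Real.rpow_mul hint]
  norm_num

variable {X E : Type*} [MeasurableSpace X] (μ : Measure X) [IsFiniteMeasure μ]
  (𝕜 : Type*) [NontriviallyNormedField 𝕜] [NormedAddCommGroup E] [NormedSpace 𝕜 E]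

/-- The inclusion of `L^q` into `L^r` over a finite measure, where `1 / p + 1 / q = 1 / r`, encoded
as the Hölder product with the constant function `1 ∈ L^p`. -/
noncomputable def lpInclusion (p q r : ℝ≥0∞) [ENNReal.HolderTriple p q r]
    [Fact (1 ≤ p)] [Fact (1 ≤ q)] [Fact (1 ≤ r)] : Lp E q μ →L[𝕜] Lp E r μ :=
  (ContinuousLinearMap.lsmul 𝕜 𝕜).holderL μ p q r (Lp.const p μ 1)

theorem coeFn_lpInclusion (p q r : ℝ≥0∞) [ENNReal.HolderTriple p q r]
    [Fact (1 ≤ p)] [Fact (1 ≤ q)] [Fact (1 ≤ r)] (f : Lp E q μ) :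
    lpInclusion μ 𝕜 p q r f =ᵐ[μ] f := by
  filter_upwards [(ContinuousLinearMap.lsmul 𝕜 𝕜).coeFn_holder (r := r) (Lp.const p μ (1 : 𝕜)) f,
    Lp.coeFn_const p μ (1 : 𝕜)] with x hx hone
  rw [lpInclusion, ContinuousLinearMap.holderL_apply_apply, hx, hone,
    ContinuousLinearMap.lsmul_apply, Function.const_apply, one_smul]

variable {μ} in
theorem norm_sq_le_mul_norm_lpInclusion {f : Lp E 2 μ} {M : ℝ} (hM : ∀ᵐ x ∂μ, ‖f x‖ ≤ M) :
    ‖f‖ ^ 2 ≤ M * ‖lpInclusion μ 𝕜 2 2 1 f‖ := by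
  have hincl := coeFn_lpInclusion μ 𝕜 2 2 1 f
  have sq_le : ∀ᵐ x ∂μ, ‖f x‖ ^ 2 ≤ M * ‖lpInclusion μ 𝕜 2 2 1 f x‖ := by
    filter_upwards [hincl, hM] with x hx hMx
    rw [hx, sq]
    gcongr
  rw [norm_sq_Lp_two_eq_integral, L1.norm_eq_integral_norm, ← integral_const_mul]
  exact integral_mono_ae ((memLp_two_iff_integrable_sq_norm (Lp.aestronglyMeasurable f)).1
    (Lp.memLp f)) ((L1.integrable_coeFn _).norm.const_mul M) sq_le

end LpInclusion

theorem L1_not_embed_in_l1_general {X E 𝕜 κ ι : Type*} [MeasurableSpace X] {μ : Measure X}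
    [IsFiniteMeasure μ] [RCLike 𝕜] [NormedAddCommGroup E] [InnerProductSpace 𝕜 E] [CompleteSpace E]
    [Infinite κ] {e : κ → Lp E 2 μ} (he : Orthonormal 𝕜 e) {M : ℝ}
    (hM : ∀ n, ∀ᵐ x ∂μ, ‖e n x‖ ≤ M) :
    ¬ ∃ (T : Lp E 1 μ →L[𝕜] lp (fun _ : ι => 𝕜) 1) (c : ℝ), 0 < c ∧
      ∀ f : Lp E 1 μ, c * ‖f‖ ≤ ‖T f‖ := by
  rintro ⟨T, c, hc, hT⟩
  let J := lpInclusion (E := E) μ 𝕜 2 2 1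
  have one_le (n : κ) : 1 ≤ M * ‖J (e n)‖ := by
    simpa only [he.norm_eq_one, one_pow] using norm_sq_le_mul_norm_lpInclusion 𝕜 (hM n)
  have images_null : Tendsto (fun n => ‖T (J (e n))‖) cofinite (𝓝 0) := by
    simpa only [norm_zero, ContinuousLinearMap.comp_apply] using
      (tendsto_map_orthonormal_lp_one he (T ∘L J)).norm
  have L1_norms_null : Tendsto (fun n => c * ‖J (e n)‖) cofinite (𝓝 0) :=
    squeeze_zero (fun n => by positivity) (fun n => hT (J (e n))) images_null
  have hlim : Tendsto (fun n => M * (c * ‖J (e n)‖)) cofinite (𝓝 0) := by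
    simpa only [mul_zero] using L1_norms_null.const_mul M
  refine (ge_of_tendsto' hlim fun n => ?_ : c ≤ 0).not_gt hc
  calc c ≤ c * (M * ‖J (e n)‖) := le_mul_of_one_le_right hc.le (one_le n)
    _ = M * (c * ‖J (e n)‖) := mul_left_comm _ _ _

section Cosine

open Real

theorem integral_cos_int_mul_pi_mul {k : ℤ} (hk : k ≠ 0) :
    ∫ x in (0 : ℝ)..1, cos (k * π * x) = 0 := by
  have hkπ : (k * π : ℝ) ≠ 0 := mul_ne_zero (mod_cast hk) pi_ne_zero
  rw [intervalIntegral.integral_comp_mul_left cos hkπ]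
  simp [sin_int_mul_pi]

theorem integral_cos_mul_cos_nat_mul_pi {m n : ℕ} (hn : n ≠ 0) :
    ∫ x in (0 : ℝ)..1, cos (m * π * x) * cos (n * π * x) = if m = n then 1 / 2 else 0 := by
  have product_to_sum (x : ℝ) : cos (m * π * x) * cos (n * π * x) =
      (cos ((m - n : ℤ) * π * x) + cos ((m + n : ℤ) * π * x)) / 2 := by
    have h := two_mul_cos_mul_cos (m * π * x) (n * π * x)
    push_cast
    rw [sub_mul, add_mul, sub_mul, add_mul]
    linarith
  simp_rw [product_to_sum]
  rw [intervalIntegral.integral_div, intervalIntegral.integral_add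
    (Continuous.intervalIntegrable (by fun_prop) _ _)
    (Continuous.intervalIntegrable (by fun_prop) _ _),
    integral_cos_int_mul_pi_mul (show (m + n : ℤ) ≠ 0 by lia), add_zero]
  split_ifs with hmn
  · simp [hmn]
  · rw [integral_cos_int_mul_pi_mul (sub_ne_zero.2 (mod_cast hmn)), zero_div]

/-- The normalised cosines `√2 cos ((n + 1) π x)` on `[0, 1]`, as elements of `L²`; the index is
shifted to leave out the constant function, whose normalisation is different. -/
noncomputable def cosineLp (n : ℕ) : Lp ℝ 2 (volume : Measure (Set.Icc (0 : ℝ) 1)) :=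
  ContinuousMap.toLp 2 volume ℝ ⟨fun x => √2 * cos ((n + 1 : ℕ) * π * x), by fun_prop⟩

theorem integral_unitInterval_eq_intervalIntegral {E : Type*} [NormedAddCommGroup E]
    [NormedSpace ℝ E] (g : ℝ → E) : ∫ x : Set.Icc (0 : ℝ) 1, g x = ∫ x in (0 : ℝ)..1, g x := by
  rw [integral_subtype measurableSet_Icc g, integral_Icc_eq_integral_Ioc,
    intervalIntegral.integral_of_le zero_le_one]

theorem orthonormal_cosineLp : Orthonormal ℝ cosineLp := by
  refine orthonormal_iff_ite.2 fun m n => ?_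
  have normalised (x : ℝ) : √2 * cos ((n + 1 : ℕ) * π * x) * (√2 * cos ((m + 1 : ℕ) * π * x)) =
      2 * (cos ((m + 1 : ℕ) * π * x) * cos ((n + 1 : ℕ) * π * x)) := by
    rw [mul_mul_mul_comm, mul_self_sqrt zero_le_two, mul_comm (cos _)]
  calc ⟪cosineLp m, cosineLp n⟫_ℝ
      = ∫ x : Set.Icc (0 : ℝ) 1,
          √2 * cos ((n + 1 : ℕ) * π * x) * (√2 * cos ((m + 1 : ℕ) * π * x)) :=
        ContinuousMap.inner_toLp volume _ _
    _ = 2 * ∫ x in (0 : ℝ)..1, cos ((m + 1 : ℕ) * π * x) * cos ((n + 1 : ℕ) * π * x) := by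
        simp_rw [normalised]
        rw [integral_const_mul, integral_unitInterval_eq_intervalIntegral
          fun x => cos ((m + 1 : ℕ) * π * x) * cos ((n + 1 : ℕ) * π * x)]
    _ = if m = n then 1 else 0 := by
        rw [integral_cos_mul_cos_nat_mul_pi n.succ_ne_zero]
        simp

theorem norm_cosineLp_apply_le (n : ℕ) : ∀ᵐ x, ‖cosineLp n x‖ ≤ √2 := by
  filter_upwards [ContinuousMap.coeFn_toLp (E := ℝ) (p := 2) (𝕜 := ℝ)
    (volume : Measure (Set.Icc (0 : ℝ) 1)) _] with x hx
  rw [cosineLp, hx]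
  change ‖√2 * cos ((n + 1 : ℕ) * π * x)‖ ≤ √2
  rw [norm_mul, norm_of_nonneg (sqrt_nonneg 2)]
  exact mul_le_of_le_one_right (sqrt_nonneg 2) (abs_cos_le_one _)

end Cosine

/-- `L¹([0,1])` does not embed isomorphically into `ℓ¹`: there is no continuous linear map
`T : L¹([0,1]) → ℓ¹` that is bounded below. -/
theorem L1_not_embed_in_l1 :
    ¬ ∃ (T : Lp ℝ 1 (volume : Measure (Set.Icc (0:ℝ) 1)) →L[ℝ] lp (fun _ : ℕ => ℝ) 1)
        (c : ℝ), 0 < c ∧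
        ∀ f : Lp ℝ 1 (volume : Measure (Set.Icc (0:ℝ) 1)), c * ‖f‖ ≤ ‖T f‖ :=
  L1_not_embed_in_l1_general orthonormal_cosineLp norm_cosineLp_apply_le
end

section
/- (Cut lemma for weighted trees.) In the rooted-tree setting, let f : List ℕ → ℝ, let A₀ be a vertex and let c ∈ ℝ. Assume that f converges to c along every branch that passes through A₀. Define f̃ : List ℕ → ℝ by f̃ s = c if A₀ is a prefix of s, and f̃ s = f s otherwise. Then Var f̃ ≤ Var f. -/
/-- The set of vertices of the rooted tree determined by `children`:
the empty list is a vertex, and `s ++ [a]` is a vertex whenever `s` is a vertex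
and `a ∈ children s`. -/
inductive IsVertex (children : List ℕ → Finset ℕ) : List ℕ → Prop
  | nil : IsVertex children []
  | append (s : List ℕ) (a : ℕ) : IsVertex children s → a ∈ children s →
      IsVertex children (s ++ [a])

/-- The weighted tree variation
`Var f = Σ_{vertices s} Σ_{a ∈ children s} 3^{−(s.length+1)} · |f (s ++ [a]) − f s|`,
with values in `[0,∞]`. -/
noncomputable def treeVar (children : List ℕ → Finset ℕ) (f : List ℕ → ℝ) : ENNReal :=
  ∑' (s : {s : List ℕ // IsVertex children s}) (a : {a : ℕ // a ∈ children s.1}),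
    ENNReal.ofReal ((3 : ℝ)⁻¹ ^ (s.1.length + 1) * |f (s.1 ++ [a.1]) - f s.1|)

/-- `x : ℕ → ℕ` is a branch if each of its initial segments is a vertex. -/
def IsBranch (children : List ℕ → Finset ℕ) (x : ℕ → ℕ) : Prop :=
  ∀ n : ℕ, IsVertex children (List.ofFn (fun i : Fin n => x i))

/-- The branch `x` passes through the vertex `A` if `A` is the initial segment of `x`
of length `A.length`. -/
def PassesThrough (x : ℕ → ℕ) (A : List ℕ) : Prop :=
  A = List.ofFn (fun i : Fin A.length => x i)

/-- `f` converges to `c` along the branch `x` if `f [x 0, …, x (n−1)] → c` as `n → ∞`. -/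
def ConvergesAlong (f : List ℕ → ℝ) (x : ℕ → ℕ) (c : ℝ) : Prop :=
  Filter.Tendsto (fun n : ℕ => f (List.ofFn (fun i : Fin n => x i))) Filter.atTop (nhds c)

/-!
Index edges by their lower endpoints, so that the edge ending at `t` contributes
`w t * edist (f t.dropLast) (f t)`, where `w t` is `3⁻¹ ^ t.length` if `t` is a vertex and `0`
otherwise. Having at least three children everywhere makes `w` superadditive: `w s` is at most the
sum of `w` over the children of `s`.

The cut removes every edge strictly below `A₀`, and leaves the edge ending at `A₀` with a cost of at
most `w A₀ * edist (f A₀.dropLast) c`. It therefore suffices to show that the latter is at most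
`T A₀`, where `T s` (`subtreeVar`) is the variation carried by the edge ending at `s` and by all
edges below it. If it is not, then `T s < w s * (edist (f s.dropLast) c - η)` at `s = A₀` for some
`η > 0`. By superadditivity and the triangle inequality this strict inequality passes from each `s`
to one of its children. It thus persists along a whole branch through `A₀`, on which `f` stays at
distance more than `η` from `c`.
-/

open Filter Topology
open scoped ENNReal

section ListSums

variable {α : Type*}

lemma tsum_list_eq_add_tsum_cons (F : List α → ℝ≥0∞) :
    ∑' t, F t = F [] + ∑' (a) (r), F (a :: r) := by
  classical
  have cons_injective : Function.Injective fun p : α × List α ↦ p.1 :: p.2 := by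
    rintro ⟨a, r⟩ ⟨b, t⟩ h
    simpa using h
  rw [ENNReal.tsum_eq_add_tsum_ite [], ← ENNReal.tsum_prod]
  congr 1
  rw [← cons_injective.tsum_eq]
  · simp
  · rintro (_ | ⟨a, r⟩) ht
    · simp at ht
    · exact ⟨(a, r), rfl⟩

lemma tsum_list_eq_add_tsum_concat (F : List α → ℝ≥0∞) :
    ∑' t, F t = F [] + ∑' (s) (a), F (s ++ [a]) := by
  have tsum_reverse (G : List α → ℝ≥0∞) : ∑' t : List α, G t.reverse = ∑' t, G t :=
    (List.reverse_involutive.toPerm _).tsum_eq G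
  rw [← tsum_reverse, tsum_list_eq_add_tsum_cons, ENNReal.tsum_comm, ← tsum_reverse]
  simp

end ListSums

section Branches

variable {α : Type*}

/-- The initial segment `[x 0, …, x (n - 1)]` of an infinite sequence. Reducible, because
`IsBranch`, `PassesThrough` and `ConvergesAlong` spell out the right-hand side. -/
abbrev initialSegment (x : ℕ → α) (n : ℕ) : List α :=
  List.ofFn fun i : Fin n ↦ x i

lemma initialSegment_succ (x : ℕ → α) (n : ℕ) :
    initialSegment x (n + 1) = initialSegment x n ++ [x n] :=
  List.ofFn_succ_last

lemma exists_forall_initialSegment {P : List α → Prop} (nil : P [])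
    (step : ∀ s, P s → ∃ a, P (s ++ [a])) : ∃ x : ℕ → α, ∀ n, P (initialSegment x n) := by
  choose next P_next using step
  let S : ℕ → {s // P s} := fun n ↦
    n.rec ⟨[], nil⟩ fun _ s ↦ ⟨s.1 ++ [next s.1 s.2], P_next s.1 s.2⟩
  let x : ℕ → α := fun n ↦ next (S n).1 (S n).2
  have initialSegment_eq (n : ℕ) : initialSegment x n = (S n).1 := by
    induction n with
    | zero => rfl
    | succ n ih => rw [initialSegment_succ, ih]
  exact ⟨x, fun n ↦ initialSegment_eq n ▸ (S n).2⟩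

lemma exists_initialSegment_eq_and_forall {P : List α → Prop} {A : List α} (base : P A)
    (step : ∀ s, A <+: s → P s → ∃ a, P (s ++ [a])) :
    ∃ x : ℕ → α, initialSegment x A.length = A ∧
      ∀ n, A.length ≤ n → P (initialSegment x n) := by
  -- With this invariant a single recursion from `[]` first retraces `A` and then follows `step`.
  have extend (s : List α) (hs : s <+: A ∨ A <+: s ∧ P s) :
      ∃ a, s ++ [a] <+: A ∨ A <+: s ++ [a] ∧ P (s ++ [a]) := by
    have extend_below (hA : A <+: s) (hPs : P s) :
        ∃ a, s ++ [a] <+: A ∨ A <+: s ++ [a] ∧ P (s ++ [a]) := by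
      obtain ⟨a, ha⟩ := step s hA hPs
      exact ⟨a, .inr ⟨hA.trans (List.prefix_append _ _), ha⟩⟩
    rcases hs with ⟨_ | ⟨a, r⟩, rfl⟩ | ⟨hA, hPs⟩
    · exact extend_below (by simp) (by simpa using base)
    · exact ⟨a, .inl ⟨r, by simp⟩⟩
    · exact extend_below hA hPs
  obtain ⟨x, hx⟩ := exists_forall_initialSegment (.inl List.nil_prefix) extend
  have isPrefix_and (n : ℕ) (hn : A.length ≤ n) :
      A <+: initialSegment x n ∧ P (initialSegment x n) := by
    refine (hx n).elim (fun h ↦ ?_) id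
    rw [h.eq_of_length_le (by simpa using hn)]
    exact ⟨List.prefix_rfl, base⟩
  exact ⟨x, ((isPrefix_and _ le_rfl).1.eq_of_length (by simp)).symm,
    fun n hn ↦ (isPrefix_and n hn).2⟩

end Branches

section WeightedVariation

variable {α E : Type*} [PseudoEMetricSpace E] {w : List α → ℝ≥0∞} {f : List α → E}
  {A s : List α} {c : E} {η : ℝ≥0∞}

/-- The contribution to the weighted variation of `f` of the edge of the tree of lists whose lower
endpoint is `t`. The root has no such edge and contributes `0`, since `[].dropLast = []`. -/
noncomputable def edgeVar (w : List α → ℝ≥0∞) (f : List α → E) (t : List α) : ℝ≥0∞ :=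
  w t * edist (f t.dropLast) (f t)

/-- The weighted variation of `f` on the tree of all lists. A subtree is encoded by letting the
weight `w` vanish outside it. -/
noncomputable def weightedVar (w : List α → ℝ≥0∞) (f : List α → E) : ℝ≥0∞ :=
  ∑' t, edgeVar w f t

/-- The part of the weighted variation of `f` carried by the edge ending at `s` and by all edges
below `s`. -/
noncomputable def subtreeVar (w : List α → ℝ≥0∞) (f : List α → E) (s : List α) : ℝ≥0∞ :=
  ∑' r, edgeVar w f (s ++ r)

/-- `f` converges to `c` along every branch through `A` of the tree that supports `w`. Only initial
segments that extend `A` are required to have nonzero weight, so that the notion depends on nothing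
but the part of the tree below `A`. -/
def HasBoundaryValueBelow (w : List α → ℝ≥0∞) (f : List α → E) (A : List α) (c : E) : Prop :=
  ∀ x : ℕ → α, initialSegment x A.length = A →
    (∀ n, A.length ≤ n → w (initialSegment x n) ≠ 0) →
    Tendsto (fun n ↦ f (initialSegment x n)) atTop (𝓝 c)

lemma weightedVar_eq_tsum_concat (w : List α → ℝ≥0∞) (f : List α → E) :
    weightedVar w f = ∑' (s) (a), w (s ++ [a]) * edist (f s) (f (s ++ [a])) := by
  rw [weightedVar, tsum_list_eq_add_tsum_concat]
  simp [edgeVar]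

lemma weightedVar_eq_tsum_not_isPrefix_add_subtreeVar (w : List α → ℝ≥0∞) (f : List α → E)
    (A : List α) :
    weightedVar w f = ∑' t : {t // ¬ A <+: t}, edgeVar w f t + subtreeVar w f A := by
  rw [weightedVar, ← ENNReal.summable.tsum_add_tsum_compl (s := Set.range (A ++ ·))
    ENNReal.summable, tsum_range _ (List.append_right_injective A), add_comm]
  rfl

lemma subtreeVar_eq_edgeVar_add_tsum (w : List α → ℝ≥0∞) (f : List α → E) (s : List α) :
    subtreeVar w f s = edgeVar w f s + ∑' a, subtreeVar w f (s ++ [a]) := by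
  rw [subtreeVar, tsum_list_eq_add_tsum_cons]
  simp [subtreeVar]

lemma exists_subtreeVar_concat_lt (hw : w s ≤ ∑' a, w (s ++ [a]))
    (hs : subtreeVar w f s < w s * (edist (f s.dropLast) c - η)) :
    ∃ a, subtreeVar w f (s ++ [a]) < w (s ++ [a]) * (edist (f s) c - η) := by
  contrapose! hs
  calc w s * (edist (f s.dropLast) c - η)
      ≤ w s * (edist (f s.dropLast) (f s) + (edist (f s) c - η)) := by
        gcongr
        exact (tsub_le_tsub_right (edist_triangle _ _ _) _).trans add_tsub_le_assoc
    _ = edgeVar w f s + w s * (edist (f s) c - η) := mul_add _ _ _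
    _ ≤ edgeVar w f s + ∑' a, w (s ++ [a]) * (edist (f s) c - η) := by
        rw [ENNReal.tsum_mul_right]
        gcongr
    _ ≤ edgeVar w f s + ∑' a, subtreeVar w f (s ++ [a]) := by
        gcongr
        exact hs _
    _ = subtreeVar w f s := (subtreeVar_eq_edgeVar_add_tsum w f s).symm

lemma mul_edist_sub_le_subtreeVar (hη : 0 < η)
    (hw : ∀ s, A <+: s → w s ≤ ∑' a, w (s ++ [a])) (hconv : HasBoundaryValueBelow w f A c) :
    w A * (edist (f A.dropLast) c - η) ≤ subtreeVar w f A := by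
  by_contra! hA
  obtain ⟨x, hxA, hx⟩ := exists_initialSegment_eq_and_forall
    (P := fun s ↦ subtreeVar w f s < w s * (edist (f s.dropLast) c - η)) hA
    fun s hAs hs ↦ by simpa using exists_subtreeVar_concat_lt (hw s hAs) hs
  have weight_ne_zero (n : ℕ) (hn : A.length ≤ n) : w (initialSegment x n) ≠ 0 :=
    left_ne_zero_of_mul (pos_of_gt (hx n hn)).ne'
  have lt_edist (n : ℕ) (hn : A.length ≤ n) : η < edist (f (initialSegment x n)) c := by
    have edist_sub_ne_zero := right_ne_zero_of_mul (pos_of_gt (hx (n + 1) (by lia))).ne'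
    rw [initialSegment_succ, List.dropLast_concat] at edist_sub_ne_zero
    exact tsub_pos_iff_lt.1 (pos_iff_ne_zero.2 edist_sub_ne_zero)
  have eventually_edist_lt := EMetric.tendsto_nhds.1 (hconv x hxA weight_ne_zero) η hη
  obtain ⟨n, hn_lt, hn⟩ := (eventually_edist_lt.and (eventually_ge_atTop A.length)).exists
  exact (lt_edist n hn).not_gt hn_lt

lemma mul_edist_le_subtreeVar
    (hw : ∀ s, A <+: s → w s ≤ ∑' a, w (s ++ [a])) (hconv : HasBoundaryValueBelow w f A c) :
    w A * edist (f A.dropLast) c ≤ subtreeVar w f A := by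
  refine ENNReal.mul_le_of_forall_lt fun w' hw' d hd ↦ ?_
  obtain ⟨η, hη, hdη⟩ := ENNReal.lt_iff_exists_add_pos_lt.1 hd
  calc w' * d ≤ w A * (edist (f A.dropLast) c - η) := by
        gcongr
        exact ENNReal.le_sub_of_add_le_right ENNReal.coe_ne_top hdη.le
    _ ≤ subtreeVar w f A := mul_edist_sub_le_subtreeVar (by exact_mod_cast hη) hw hconv

lemma edgeVar_cut_of_not_isPrefix [DecidableEq α] {t : List α} (ht : ¬ A <+: t) :
    edgeVar w (fun s ↦ if A <+: s then c else f s) t = edgeVar w f t := by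
  have ht' : ¬ A <+: t.dropLast := fun h ↦ ht (h.trans t.dropLast_prefix)
  simp [edgeVar, ht, ht']

lemma subtreeVar_cut_le [DecidableEq α] :
    subtreeVar w (fun s ↦ if A <+: s then c else f s) A ≤ w A * edist (f A.dropLast) c := by
  have below_eq_zero (a : α) :
      subtreeVar w (fun s ↦ if A <+: s then c else f s) (A ++ [a]) = 0 := by
    simp [subtreeVar, edgeVar]
  rw [subtreeVar_eq_edgeVar_add_tsum]
  simp only [below_eq_zero, tsum_zero, add_zero, edgeVar, List.prefix_rfl, if_true]
  gcongr
  split_ifs <;> simp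

theorem treeVar_cut_le_general [DecidableEq α]
    (hw : ∀ s, A <+: s → w s ≤ ∑' a, w (s ++ [a])) (hconv : HasBoundaryValueBelow w f A c) :
    weightedVar w (fun s ↦ if A <+: s then c else f s) ≤ weightedVar w f := by
  simp only [weightedVar_eq_tsum_not_isPrefix_add_subtreeVar w _ A]
  gcongr ?_ + ?_
  · exact (tsum_congr fun t ↦ edgeVar_cut_of_not_isPrefix t.2).le
  · exact subtreeVar_cut_le.trans (mul_edist_le_subtreeVar hw hconv)

end WeightedVariation

section Vertices

variable {children : List ℕ → Finset ℕ}

lemma isVertex_concat_iff {s : List ℕ} {a : ℕ} :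
    IsVertex children (s ++ [a]) ↔ IsVertex children s ∧ a ∈ children s := by
  refine ⟨fun h ↦ ?_, fun h ↦ .append s a h.1 h.2⟩
  generalize ht : s ++ [a] = t at h
  cases h with
  | nil => simp at ht
  | append s' a' hs' ha' =>
    obtain ⟨rfl, h_eq⟩ := List.append_inj' ht rfl
    obtain rfl : a = a' := by simpa using h_eq
    exact ⟨hs', ha'⟩

lemma isBranch_of_forall_le {x : ℕ → ℕ} {N : ℕ}
    (hx : ∀ n, N ≤ n → IsVertex children (initialSegment x n)) : IsBranch children x := by
  intro n
  induction h : N - n generalizing n with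
  | zero => exact hx n (by lia)
  | succ k ih =>
    have succ_isVertex := ih (n + 1) (by lia)
    rw [List.ofFn_succ_last] at succ_isVertex
    exact (isVertex_concat_iff.1 succ_isVertex).1

open Classical in
/-- The weight `q ^ n` on the vertices of depth `n`, extended by zero to all lists. For
`q = 3⁻¹` these are the weights of `treeVar`. -/
noncomputable def vertexWeight (q : ℝ≥0∞) (children : List ℕ → Finset ℕ) (s : List ℕ) : ℝ≥0∞ :=
  if IsVertex children s then q ^ s.length else 0

lemma vertexWeight_le_tsum {q : ℝ≥0∞} {s : List ℕ}
    (h : IsVertex children s → 1 ≤ (children s).card * q) :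
    vertexWeight q children s ≤ ∑' a, vertexWeight q children (s ++ [a]) := by
  by_cases hs : IsVertex children s
  swap
  · simp [vertexWeight, hs]
  calc vertexWeight q children s = q ^ s.length * 1 := by simp [vertexWeight, hs]
    _ ≤ q ^ s.length * ((children s).card * q) := by gcongr; exact h hs
    _ = ∑ _a ∈ children s, q ^ (s.length + 1) := by rw [Finset.sum_const, nsmul_eq_mul]; ring
    _ = ∑ a ∈ children s, vertexWeight q children (s ++ [a]) :=
        Finset.sum_congr rfl fun a ha ↦ by simp [vertexWeight, isVertex_concat_iff, hs, ha]
    _ ≤ ∑' a, vertexWeight q children (s ++ [a]) := ENNReal.sum_le_tsum _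

lemma treeVar_eq_weightedVar (children : List ℕ → Finset ℕ) (f : List ℕ → ℝ) :
    treeVar children f = weightedVar (vertexWeight 3⁻¹ children) f := by
  have edge_eq (s : List ℕ) (a : ℕ) :
      ENNReal.ofReal ((3 : ℝ)⁻¹ ^ (s.length + 1) * |f (s ++ [a]) - f s|) =
        3⁻¹ ^ (s.length + 1) * edist (f s) (f (s ++ [a])) := by
    rw [ENNReal.ofReal_mul (by positivity), ENNReal.ofReal_pow (by positivity),
      ENNReal.ofReal_inv_of_pos (by positivity), ENNReal.ofReal_ofNat, edist_comm, edist_dist,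
      Real.dist_eq]
  rw [weightedVar_eq_tsum_concat, treeVar]
  simp only [edge_eq]
  refine (tsum_subtype {s | IsVertex children s} fun s ↦ ∑' a : {a // a ∈ children s},
    3⁻¹ ^ (s.length + 1) * edist (f s) (f (s ++ [a.1]))).trans (tsum_congr fun s ↦ ?_)
  by_cases hs : IsVertex children s
  · rw [Set.indicator_of_mem (by exact hs)]
    refine (tsum_subtype (children s : Set ℕ) fun a ↦
      3⁻¹ ^ (s.length + 1) * edist (f s) (f (s ++ [a]))).trans (tsum_congr fun a ↦ ?_)
    by_cases ha : a ∈ children s <;> simp [vertexWeight, isVertex_concat_iff, hs, ha]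
  · simp [vertexWeight, isVertex_concat_iff, hs]

end Vertices

/-- Cut lemma for weighted trees: if every vertex has at least 3 children and `f` converges
to `c` along every branch passing through the vertex `A₀`, then replacing `f` by the constant
`c` on the whole subtree below `A₀` does not increase the weighted tree variation. -/
theorem treeVar_cut_le
    (children : List ℕ → Finset ℕ)
    (hcard : ∀ s : List ℕ, IsVertex children s → 3 ≤ (children s).card)
    (A₀ : List ℕ) (hA₀ : IsVertex children A₀) (c : ℝ) (f : List ℕ → ℝ)
    (hconv : ∀ x : ℕ → ℕ, IsBranch children x → PassesThrough x A₀ →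
      ConvergesAlong f x c) :
    treeVar children (fun s => if A₀ <+: s then c else f s) ≤ treeVar children f := by
  rw [treeVar_eq_weightedVar, treeVar_eq_weightedVar]
  have one_le_card_mul (s : List ℕ) (hs : IsVertex children s) :
      1 ≤ ((children s).card : ℝ≥0∞) * 3⁻¹ := by
    rw [← div_eq_mul_inv, ENNReal.le_div_iff_mul_le (by simp) (by simp), one_mul]
    exact_mod_cast hcard s hs
  refine treeVar_cut_le_general (fun s _ ↦ vertexWeight_le_tsum (one_le_card_mul s))
    fun x hxA hx ↦ hconv x (isBranch_of_forall_le (N := A₀.length) fun n hn ↦ ?_) hxA.symm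
  by_contra hv
  exact hx n hn (if_neg hv)
end

section
/- (Weighted comparison of horizontal and vertical differences in a graded graph.) Let (D_n)_{n∈ℕ} be a family of pairwise disjoint countable sets of vertices with D_0 a singleton, let p : D_{n+1} → D_n (for each n) be a parent map, and for each n let H_n be a symmetric irreflexive relation on D_n, with H_0 empty. Assume: (i) every A ∈ D_n is H_n-related to at most 2 vertices; (ii) whenever (A,B) ∈ H_n with n ≥ 1, either p A = p B or (p A, p B) ∈ H_{n−1}; (iii) for every pair (P,Q) ∈ H_{n−1}, there are at most 2 unordered pairs {A,B} with (A,B) ∈ H_n, p A = P and p B = Q. Then for every real-valued function f on the union of the D_n, Σ_{n≥1} Σ_{unordered pairs {A,B} with (A,B) ∈ H_n} 3^{−n} |f A − f B| ≤ 6 · Σ_{n≥1} Σ_{A ∈ D_n} 3^{−n} |f A − f (p A)|, as an inequality in [0,∞]. -/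
/-!
By the triangle inequality a horizontal edge `{A, B}` of generation `n + 1` costs at most its two
vertical detours `A – p A` and `B – p B` plus the cost of its image `{p A, p B}`, which is either a
point or a horizontal edge of generation `n`. Bounded degree controls the detours and bounded
multiplicity controls the images, so the weighted sums `aₙ` over horizontal edges and `bₙ` over
vertical edges of generation `n` satisfy `aₙ₊₁ ≤ d bₙ₊₁ + m r aₙ`, where `r` is the ratio of
consecutive weights. A geometric series of ratio `m r = 2 / 3` then gives the constant
`d / (1 - m r) = 6`.
-/

open scoped ENNReal

section TsumENNReal

-- The factor `(1 - q)⁻¹` is the sum of the geometric series also for `1 ≤ q`, when it is `∞`.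
theorem tsum_succ_le_of_succ_le_add_mul {a b : ℕ → ℝ≥0∞} {q : ℝ≥0∞}
    (h : ∀ n, a (n + 1) ≤ b n + q * a n) :
    ∑' n, a (n + 1) ≤ (1 - q)⁻¹ * (q * a 0 + ∑' n, b n) := by
  set c := q * a 0 + ∑' n, b n
  have partial_sum_le (N : ℕ) :
      ∑ n ∈ Finset.range N, a (n + 1) ≤ (∑ k ∈ Finset.range N, q ^ k) * c := by
    induction N with
    | zero => simp
    | succ N ih =>
      calc ∑ n ∈ Finset.range (N + 1), a (n + 1)
          ≤ ∑ n ∈ Finset.range (N + 1), (b n + q * a n) := Finset.sum_le_sum fun n _ => h n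
        _ = q * ∑ n ∈ Finset.range N, a (n + 1)
              + (q * a 0 + ∑ n ∈ Finset.range (N + 1), b n) := by
            rw [Finset.sum_add_distrib, ← Finset.mul_sum, Finset.sum_range_succ' a]
            ring
        _ ≤ q * ((∑ k ∈ Finset.range N, q ^ k) * c) + c := by
            gcongr
            exact add_le_add_right (ENNReal.sum_le_tsum _) _
        _ = (∑ k ∈ Finset.range (N + 1), q ^ k) * c := by
            rw [geom_sum_succ]
            ring
  rw [ENNReal.tsum_eq_iSup_nat, ← ENNReal.tsum_geometric]
  exact iSup_le fun N => (partial_sum_le N).trans <| by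
    gcongr
    exact ENNReal.sum_le_tsum _

theorem tsum_comp_le_mul_tsum_of_encard_fiber_le {α β : Type*} {s : Set α} {t : Set β}
    {π : α → β} {F : β → ℝ≥0∞} {m : ℕ∞} (hsupp : ∀ a ∈ s, F (π a) ≠ 0 → π a ∈ t)
    (hfiber : ∀ b ∈ t, {a ∈ s | π a = b}.encard ≤ m) :
    ∑' a : s, F (π a) ≤ m * ∑' b : t, F b := by
  classical
  calc ∑' a : s, F (π a)
      ≤ ∑' a : s, ∑' b : t, if π a = b then F b else 0 := by
        refine ENNReal.tsum_le_tsum fun a => ?_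
        by_cases hzero : F (π a) = 0
        · simp [hzero]
        · simpa using ENNReal.le_tsum (f := fun b : t => if π a = b then F b else 0)
            ⟨π a, hsupp a a.2 hzero⟩
    _ = ∑' b : t, ∑' a : s, if π a = b then F b else 0 := ENNReal.tsum_comm
    _ = ∑' b : t, {a ∈ s | π a = b}.encard * F b := by
        refine tsum_congr fun b => ?_
        rw [← ENNReal.tsum_set_const, tsum_subtype s fun a => if π a = b then F b else 0,
          tsum_subtype {a ∈ s | π a = b} fun _ => F b]
        simp only [Set.indicator_apply, Set.mem_ofPred_eq, ite_and]
    _ ≤ ∑' b : t, m * F b := by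
        gcongr with b
        exact hfiber b b.2
    _ = m * ∑' b : t, F b := ENNReal.tsum_mul_left

end TsumENNReal

section Incidence

variable {V : Type*} (G : SimpleGraph V)

theorem encard_incidenceSet (v : V) : (G.incidenceSet v).encard = (G.neighborSet v).encard := by
  classical exact Set.encard_congr (G.incidenceSetEquivNeighborSet v)

theorem tsum_indicator_sym2_mk (g : V → ℝ≥0∞) {v w : V} (h : v ≠ w) :
    ∑' x, (s(v, w) : Set V).indicator g x = g v + g w := by
  classical
  rw [← tsum_subtype, Sym2.coe_mk, ← Finset.coe_pair, Finset.tsum_subtype', Finset.sum_pair h]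

theorem tsum_edgeSet_tsum_indicator (g : V → ℝ≥0∞) :
    ∑' e : G.edgeSet, ∑' v, (e : Set V).indicator g v
      = ∑' v, (G.neighborSet v).encard * g v := by
  classical
  rw [ENNReal.tsum_comm]
  refine tsum_congr fun v => ?_
  rw [← encard_incidenceSet, ← ENNReal.tsum_set_const,
    tsum_subtype G.edgeSet fun e => (e : Set V).indicator g v,
    tsum_subtype (G.incidenceSet v) fun _ => g v]
  simp only [Set.indicator_apply, SetLike.mem_coe, SimpleGraph.incidenceSet, Set.mem_ofPred_eq,
    ite_and]

theorem tsum_edgeSet_tsum_indicator_le {D : Set V} {d : ℕ∞} (hsupport : G.support ⊆ D)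
    (hdeg : ∀ v, (G.neighborSet v).encard ≤ d) (g : V → ℝ≥0∞) :
    ∑' e : G.edgeSet, ∑' v, (e : Set V).indicator g v ≤ d * ∑' v : D, g v := by
  rw [tsum_edgeSet_tsum_indicator, tsum_subtype, ← ENNReal.tsum_mul_left]
  refine ENNReal.tsum_le_tsum fun v => ?_
  by_cases hv : v ∈ D
  · rw [Set.indicator_of_mem hv]
    gcongr
    exact hdeg v
  · have no_neighbors : G.neighborSet v = ∅ :=
      Set.eq_empty_of_forall_notMem fun w hw => hv (hsupport ⟨w, hw⟩)
    simp [no_neighbors]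

theorem setOf_edge_map_eq_mk {W : Type*} (π : V → W) (x y : W) :
    {e ∈ G.edgeSet | e.map π = s(x, y)}
      = {e | ∃ v w, e = s(v, w) ∧ G.Adj v w ∧ π v = x ∧ π w = y} := by
  ext e
  constructor
  · induction e with
    | _ v w =>
      rintro ⟨hadj, hmap⟩
      rcases Sym2.eq_iff.mp hmap with ⟨hv, hw⟩ | ⟨hv, hw⟩
      · exact ⟨v, w, rfl, hadj, hv, hw⟩
      · exact ⟨w, v, Sym2.eq_swap, hadj.symm, hw, hv⟩
  · rintro ⟨v, w, rfl, hadj, rfl, rfl⟩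
    exact ⟨hadj, rfl⟩

end Incidence

section EdgeVariation

variable {V W X : Type*} [PseudoEMetricSpace X]

/-- The distance between the two members of an unordered pair. -/
noncomputable def sym2EDist : Sym2 X → ℝ≥0∞ :=
  Sym2.lift ⟨edist, edist_comm⟩

/-- The total variation of `f` along the edges of `G`, each edge counted once: the horizontal part
of the graph seminorm on `BV_G`. -/
noncomputable def edgeVariation (G : SimpleGraph V) (f : V → X) : ℝ≥0∞ :=
  ∑' e : G.edgeSet, sym2EDist ((e : Sym2 V).map f)

theorem sym2EDist_map_le {G : SimpleGraph V} (π : V → W) (f : V → X) (f' : W → X) {e : Sym2 V}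
    (he : e ∈ G.edgeSet) :
    sym2EDist (e.map f) ≤ ∑' v, (e : Set V).indicator (fun v => edist (f v) (f' (π v))) v
      + sym2EDist ((e.map π).map f') := by
  induction e with
  | _ v w =>
    rw [tsum_indicator_sym2_mk _ (SimpleGraph.Adj.ne he)]
    calc edist (f v) (f w)
        ≤ edist (f v) (f' (π v)) + edist (f' (π v)) (f' (π w)) + edist (f' (π w)) (f w) :=
          edist_triangle4 _ _ _ _
      _ = edist (f v) (f' (π v)) + edist (f w) (f' (π w)) + edist (f' (π v)) (f' (π w)) := by
          rw [edist_comm (f' (π w)), add_right_comm]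

theorem tsum_sym2EDist_map_map_le {G : SimpleGraph V} {G' : SimpleGraph W} {π : V → W} {m : ℕ∞}
    (hπ : ∀ v w, G.Adj v w → π v = π w ∨ G'.Adj (π v) (π w))
    (hmult : ∀ x y, G'.Adj x y →
      {e | ∃ v w, e = s(v, w) ∧ G.Adj v w ∧ π v = x ∧ π w = y}.encard ≤ m) (f' : W → X) :
    ∑' e : G.edgeSet, sym2EDist (((e : Sym2 V).map π).map f') ≤ m * edgeVariation G' f' := by
  let F (e : Sym2 W) : ℝ≥0∞ := sym2EDist (e.map f')
  refine tsum_comp_le_mul_tsum_of_encard_fiber_le (F := F) ?_ ?_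
  · intro e he hne
    induction e with
    | _ v w =>
      refine (hπ v w he).resolve_left fun heq => hne ?_
      simp [F, sym2EDist, heq]
  · intro e' he'
    induction e' with
    | _ x y =>
      rw [setOf_edge_map_eq_mk]
      exact hmult x y he'

theorem edgeVariation_le_add {G : SimpleGraph V} {G' : SimpleGraph W} {D : Set V} {π : V → W}
    {d m : ℕ∞} (hsupport : G.support ⊆ D) (hdeg : ∀ v, (G.neighborSet v).encard ≤ d)
    (hπ : ∀ v w, G.Adj v w → π v = π w ∨ G'.Adj (π v) (π w))
    (hmult : ∀ x y, G'.Adj x y →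
      {e | ∃ v w, e = s(v, w) ∧ G.Adj v w ∧ π v = x ∧ π w = y}.encard ≤ m)
    (f : V → X) (f' : W → X) :
    edgeVariation G f ≤ d * ∑' v : D, edist (f v) (f' (π v)) + m * edgeVariation G' f' :=
  calc edgeVariation G f
      ≤ ∑' e : G.edgeSet, (∑' v, (e : Set V).indicator (fun v => edist (f v) (f' (π v))) v
          + sym2EDist (((e : Sym2 V).map π).map f')) :=
        ENNReal.tsum_le_tsum fun e => sym2EDist_map_le π f f' e.2
    _ = ∑' e : G.edgeSet, ∑' v, (e : Set V).indicator (fun v => edist (f v) (f' (π v))) v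
          + ∑' e : G.edgeSet, sym2EDist (((e : Sym2 V).map π).map f') := ENNReal.tsum_add
    _ ≤ d * ∑' v : D, edist (f v) (f' (π v)) + m * edgeVariation G' f' :=
        add_le_add (tsum_edgeSet_tsum_indicator_le G hsupport hdeg _)
          (tsum_sym2EDist_map_map_le hπ hmult f')

theorem edgeVariation_bot (f : V → X) : edgeVariation ⊥ f = 0 := by
  simp [edgeVariation]

theorem horizontal_le_vertical_general (D : ℕ → Set V) (π : V → V) (G : ℕ → SimpleGraph V)
    {d m : ℕ∞} (hsupport : ∀ n, (G (n + 1)).support ⊆ D (n + 1))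
    (hdeg : ∀ n v, ((G (n + 1)).neighborSet v).encard ≤ d)
    (hπ : ∀ n v w, (G (n + 1)).Adj v w → π v = π w ∨ (G n).Adj (π v) (π w))
    (hmult : ∀ n x y, (G n).Adj x y →
      {e | ∃ v w, e = s(v, w) ∧ (G (n + 1)).Adj v w ∧ π v = x ∧ π w = y}.encard ≤ m)
    (r : ℝ≥0∞) (f : V → X) :
    ∑' n, r ^ (n + 1) * edgeVariation (G (n + 1)) f
      ≤ (1 - m * r)⁻¹ * (m * r * edgeVariation (G 0) f
        + d * ∑' n, r ^ (n + 1) * ∑' v : D (n + 1), edist (f v) (f (π v))) := by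
  have recursion (n : ℕ) : r ^ (n + 1) * edgeVariation (G (n + 1)) f
      ≤ d * (r ^ (n + 1) * ∑' v : D (n + 1), edist (f v) (f (π v)))
        + m * r * (r ^ n * edgeVariation (G n) f) :=
    calc r ^ (n + 1) * edgeVariation (G (n + 1)) f
        ≤ r ^ (n + 1) * (d * ∑' v : D (n + 1), edist (f v) (f (π v))
            + m * edgeVariation (G n) f) := by
          gcongr
          exact edgeVariation_le_add (hsupport n) (hdeg n) (hπ n) (hmult n) f f
      _ = _ := by ring
  simpa only [pow_zero, one_mul, ENNReal.tsum_mul_left] using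
    tsum_succ_le_of_succ_le_add_mul (a := fun n => r ^ n * edgeVariation (G n) f) recursion

end EdgeVariation

section Real

variable {V : Type*}

theorem ofReal_pow_mul_abs_sub {r : ℝ} (hr : 0 ≤ r) (k : ℕ) (x y : ℝ) :
    ENNReal.ofReal (r ^ k * |x - y|) = ENNReal.ofReal r ^ k * edist x y := by
  rw [ENNReal.ofReal_mul (pow_nonneg hr k), ENNReal.ofReal_pow hr, edist_dist, Real.dist_eq]

theorem edgeSet_eq_setOf_exists (G : SimpleGraph V) :
    G.edgeSet = {e | ∃ v w, e = s(v, w) ∧ G.Adj v w} := by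
  ext e
  induction e with
  | _ v w =>
    refine ⟨fun h => ⟨v, w, rfl, h⟩, ?_⟩
    rintro ⟨v', w', heq, h⟩
    rwa [heq]

theorem tsum_ofReal_pow_mul_abs_sub (G : SimpleGraph V) (f : V → ℝ) {r : ℝ} (hr : 0 ≤ r) (k : ℕ) :
    ∑' e : {e : Sym2 V // ∃ v w, e = s(v, w) ∧ G.Adj v w},
        Sym2.lift ⟨fun v w => ENNReal.ofReal (r ^ k * |f v - f w|),
          fun v w => by simp [abs_sub_comm]⟩ e.1
      = ENNReal.ofReal r ^ k * edgeVariation G f := by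
  rw [edgeVariation, ← ENNReal.tsum_mul_left, edgeSet_eq_setOf_exists]
  refine tsum_congr fun ⟨e, _⟩ => ?_
  induction e with
  | _ v w => exact ofReal_pow_mul_abs_sub hr k (f v) (f w)

theorem inv_one_sub_two_mul_inv_three_mul_two :
    (1 - 2 * 3⁻¹ : ℝ≥0∞)⁻¹ * 2 = 6 := by
  have one_third : (1 - 2 * 3⁻¹ : ℝ≥0∞) = 3⁻¹ := by
    refine ENNReal.sub_eq_of_eq_add (by finiteness) ?_
    rw [add_comm, ← add_one_mul, two_add_one_eq_three,
      ENNReal.mul_inv_cancel three_ne_zero (by finiteness)]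
  rw [one_third, inv_inv]
  norm_num

end Real

/-- Weighted comparison of horizontal and vertical differences in a graded graph: under the
degree and compatibility assumptions (i)–(iii), the weighted sum (weights `3^{−n}` at
generation `n`) over horizontal edges (unordered pairs, counted once) is at most `6` times
the weighted sum over parent–child edges, as an inequality in `[0,∞]`. -/
theorem horizontal_le_vertical
    (V : Type*) (D : ℕ → Set V)
    (hcount : ∀ n : ℕ, (D n).Countable)
    (hdisj : ∀ m n : ℕ, m ≠ n → Disjoint (D m) (D n))
    (hD0 : ∃ v : V, D 0 = {v})
    (p : V → V) (hp : ∀ n : ℕ, ∀ A ∈ D (n + 1), p A ∈ D n)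
    (H : ℕ → V → V → Prop)
    (hsymm : ∀ n A B, H n A B → H n B A)
    (hirr : ∀ n A, ¬ H n A A)
    (hmem : ∀ n A B, H n A B → A ∈ D n ∧ B ∈ D n)
    (hH0 : ∀ A B, ¬ H 0 A B)
    (hdeg : ∀ n A, {B | H n A B}.encard ≤ 2)
    (hpar : ∀ n A B, H (n + 1) A B → p A = p B ∨ H n (p A) (p B))
    (hmult : ∀ n P Q, H n P Q →
      {e : Sym2 V | ∃ A B, e = s(A, B) ∧ H (n + 1) A B ∧ p A = P ∧ p B = Q}.encard ≤ 2)
    (f : V → ℝ) :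
    ∑' (n : ℕ) (e : {e : Sym2 V // ∃ A B, e = s(A, B) ∧ H (n + 1) A B}),
        Sym2.lift ⟨fun A B => ENNReal.ofReal ((3 : ℝ)⁻¹ ^ (n + 1) * |f A - f B|),
          fun A B => by simp [abs_sub_comm]⟩ e.1
      ≤ 6 * ∑' (n : ℕ) (A : D (n + 1)),
          ENNReal.ofReal ((3 : ℝ)⁻¹ ^ (n + 1) * |f A - f (p A)|) := by
  let G (n : ℕ) : SimpleGraph V := ⟨H n, ⟨hsymm n⟩, ⟨hirr n⟩⟩
  have hG0 : G 0 = ⊥ := SimpleGraph.eq_bot_iff_forall_not_adj.mpr hH0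
  have hr : (0 : ℝ) ≤ 3⁻¹ := by positivity
  have hratio : ENNReal.ofReal 3⁻¹ = 3⁻¹ := by simp [ENNReal.ofReal_inv_of_pos]
  calc _ = ∑' n, ENNReal.ofReal 3⁻¹ ^ (n + 1) * edgeVariation (G (n + 1)) f :=
        tsum_congr fun n => tsum_ofReal_pow_mul_abs_sub (G (n + 1)) f hr (n + 1)
    _ ≤ _ := horizontal_le_vertical_general D p G (fun n A ⟨B, hAB⟩ => (hmem (n + 1) A B hAB).1)
        (fun n => hdeg (n + 1)) hpar hmult (ENNReal.ofReal 3⁻¹) f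
    _ = _ := by
        simp only [ofReal_pow_mul_abs_sub hr, ENNReal.tsum_mul_left]
        rw [hG0, edgeVariation_bot, mul_zero, zero_add, hratio, ENat.toENNReal_ofNat, ← mul_assoc,
          inv_one_sub_two_mul_inv_three_mul_two]
end
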